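/- Let K be a group, H a subgroup of K, and N a type with a multiplicative action of H. Let H act on K × N by h • (k, n) = (k * h⁻¹, h • n), let Q denote the quotient of K × N by the orbit equivalence relation of this H-action, and write ⟦(k, n)⟧ for the class of (k, n). Let G be a normal subgroup of K, acting on Q by g • ⟦(k, n)⟧ = ⟦(g * k, n)⟧ (this action is well defined because left multiplication by G commutes with the H-action). Then for every k ∈ K and n ∈ N, the stabilizer of ⟦(k, n)⟧ in G, i.e. { g ∈ G : ⟦(g * k, n)⟧ = ⟦(k, n)⟧ }, equals the conjugate by k of the stabilizer of n in G ∩ H, that is, it equals { k * g * k⁻¹ : g ∈ G ∩ H, g • n = n } as a subset of K. -/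

import Mathlib

/-- The `H`-action on `K × N` given by `h • (k, n) = (k * h⁻¹, h • n)`, as a setoid
whose classes are the orbits. The quotient is the twisted product `K ×_H N`. -/
def twistedSetoid {K : Type*} [Group K] (H : Subgroup K) (N : Type*) [MulAction H N] :
    Setoid (K × N) where
  r p q := ∃ h : H, (p.1 * (h : K)⁻¹, h • p.2) = q
  iseqv := by
    constructor
    · intro p
      exact ⟨1, by simp⟩
    · rintro p q ⟨h, rfl⟩
      exact ⟨h⁻¹, by simp [mul_assoc, smul_smul]⟩
    · rintro p q r ⟨h, rfl⟩ ⟨h', rfl⟩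
      exact ⟨h' * h, by simp [mul_assoc, smul_smul]⟩

/-- The class `⟦(k, n)⟧` of `(k, n)` in the twisted product `K ×_H N`. -/
def twistedMk {K : Type*} [Group K] (H : Subgroup K) {N : Type*} [MulAction H N]
    (k : K) (n : N) : Quotient (twistedSetoid H N) :=
  Quotient.mk (twistedSetoid H N) (k, n)

/-- For the action of a normal subgroup `G ≤ K` on the twisted product `K ×_H N` given by
`g • ⟦(k, n)⟧ = ⟦(g * k, n)⟧`, the stabilizer of `⟦(k, n)⟧` in `G` is the conjugate by `k`
of the stabilizer of `n` in `G ∩ H`. -/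
theorem stabilizer_twistedProduct_eq_conj {K : Type*} [Group K] (H : Subgroup K)
    {N : Type*} [MulAction H N] (G : Subgroup K) (hG : G.Normal) (k : K) (n : N) :
    {g : K | g ∈ G ∧ twistedMk H (g * k) n = twistedMk H k n}
      = {x : K | ∃ g : H, (g : K) ∈ G ∧ g • n = n ∧ x = k * (g : K) * k⁻¹} := by
  ext x
  constructor
  · rintro ⟨hx, he⟩
    obtain ⟨h, hh⟩ : ∃ h : H, (x * k * (h : K)⁻¹, h • n) = (k, n) := Quotient.exact he
    obtain ⟨h1, h2⟩ := Prod.mk.inj hh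
    have h3 : x * k = k * (h : K) := mul_inv_eq_iff_eq_mul.mp h1
    have h4 : x = k * (h : K) * k⁻¹ := eq_mul_inv_iff_mul_eq.mpr h3
    refine ⟨h, ?_, h2, h4⟩
    have h5 := hG.conj_mem x hx k⁻¹
    rw [h4] at h5
    simpa [mul_assoc] using h5
  · rintro ⟨h, hh, hn, rfl⟩
    refine ⟨hG.conj_mem _ hh k, Quotient.sound ?_⟩
    exact ⟨h, by simp [hn]⟩
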